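/- Let n ≥ 2 and let E ⊂ ℝⁿ be a non-empty Borel set. Then the union of hyperplanes L(E) = ⋃_{p ∈ E} L(p) satisfies dim_H L(E) = min{dim_H E + n − 1, n}. -/

import Mathlib

/-!
The union of hyperplanes is the image of `E × ℝⁿ⁻¹` under the smooth map
`((a, b), x) ↦ (x, a·x + b)`, which gives the upper bound.

For the lower bound, cover `L(E)` by balls, finitely many of each radius `2⁻ᵏ`. For every `p ∈ E`
there is a `k` for which the balls of radius `δ = 2⁻ᵏ` contain the part of `L(p)` over a
non-negligible set of base points, so it suffices to bound, for each `k`, the Hausdorff content of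
the set of such `p`. A finite form of Frostman's lemma puts weights of total mass comparable to this
content on finitely many of these `p`, giving mass at most `2⁻ʲˢ` to each ball of radius `2⁻ʲ`,
`j ≤ k`, about one of them. The base points over which two hyperplanes `L(p)`, `L(q)` are `δ`-close
form a slab of measure `≲ δ / (δ + |p - q|)`; hence, for `s ≤ 1`, the weighted sum of these measures
over all pairs is `≲ k δˢ` times the total mass, and the Cauchy–Schwarz inequality for the
incidences between balls and hyperplanes bounds the content by the number of balls times
`k δˢ⁺ⁿ⁻¹`, up to an arbitrarily small power of `δ`.
-/

open MeasureTheory RealInnerProductSpace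

/-- The non-vertical hyperplane `L(a,b) = {(x,y) : y = a·x + b}` in `ℝⁿ = ℝ^{n−1} × ℝ`
associated to the point `p = (a,b)`. -/
def hyperplane {n : ℕ} (p : EuclideanSpace ℝ (Fin (n - 1)) × ℝ) :
    Set (EuclideanSpace ℝ (Fin (n - 1)) × ℝ) :=
  {q | q.2 = ⟪p.1, q.1⟫ + p.2}

/-- `L(E) = ⋃_{p ∈ E} L(p)`, the union of the hyperplanes parametrized by `E`. -/
def hyperplaneUnion {n : ℕ} (E : Set (EuclideanSpace ℝ (Fin (n - 1)) × ℝ)) :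
    Set (EuclideanSpace ℝ (Fin (n - 1)) × ℝ) :=
  ⋃ p ∈ E, hyperplane p

section HausdorffContent

open Metric Set Filter Topology
open scoped ENNReal NNReal

/-- The `s`-dimensional Hausdorff content: the infimum of `∑ (diam Uᵢ) ^ s` over all countable
covers by sets `Uᵢ` of any size. For `s > 0` it has the same null sets as `μH[s]`, and every bounded
set has finite content, which is what makes finite approximations possible. -/
noncomputable def hausdorffContent {X : Type*} [PseudoEMetricSpace X] (s : ℝ) : OuterMeasure X :=
  OuterMeasure.boundedBy fun U => ediam U ^ s

theorem hausdorffContent_le_hausdorffMeasure {X : Type*} [EMetricSpace X] [MeasurableSpace X]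
    [BorelSpace X] (s : ℝ) (S : Set X) : hausdorffContent s S ≤ μH[s] S := by
  rw [hausdorffContent, OuterMeasure.boundedBy_apply, Measure.hausdorffMeasure_apply]
  refine le_iSup₂_of_le 1 one_pos (le_iInf₂ fun t hSt => le_iInf fun _ => ?_)
  exact iInf₂_le t hSt

theorem exists_cover_of_hausdorffContent_eq_zero {X : Type*} [PseudoEMetricSpace X] {s : ℝ}
    (hs : 0 < s) {S : Set X} (hS : hausdorffContent s S = 0) {ε r : ℝ≥0∞} (hε : 0 < ε)
    (hr : 0 < r) :
    ∃ U : ℕ → Set X, S ⊆ ⋃ i, U i ∧ (∀ i, ediam (U i) ≤ r) ∧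
      ∑' i, ⨆ _ : (U i).Nonempty, ediam (U i) ^ s < ε := by
  have h_lt : hausdorffContent s S < min ε (r ^ s) := by
    rw [hS]
    exact lt_min hε (ENNReal.rpow_pos_of_nonneg hr hs.le)
  rw [hausdorffContent, OuterMeasure.boundedBy_apply] at h_lt
  simp only [iInf_lt_iff] at h_lt
  obtain ⟨U, hSU, hsum⟩ := h_lt
  refine ⟨U, hSU, fun i => ?_, hsum.trans_le (min_le_left _ _)⟩
  rcases (U i).eq_empty_or_nonempty with hi | hi
  · simp [hi]
  · rw [← ENNReal.rpow_le_rpow_iff hs]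
    calc ediam (U i) ^ s = ⨆ _ : (U i).Nonempty, ediam (U i) ^ s := by simp [hi]
      _ ≤ ∑' i, ⨆ _ : (U i).Nonempty, ediam (U i) ^ s := ENNReal.le_tsum i
      _ ≤ r ^ s := hsum.le.trans (min_le_right _ _)

theorem hausdorffContent_eq_zero_iff {X : Type*} [EMetricSpace X] [MeasurableSpace X]
    [BorelSpace X] {s : ℝ} (hs : 0 < s) {S : Set X} :
    hausdorffContent s S = 0 ↔ μH[s] S = 0 := by
  refine ⟨fun hS => ?_, fun hS => le_zero_iff.mp <|
    (hausdorffContent_le_hausdorffMeasure s S).trans hS.le⟩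
  rw [Measure.hausdorffMeasure_apply, ← nonpos_iff_eq_zero]
  refine iSup₂_le fun r hr => le_of_forall_pos_le_add fun ε hε => ?_
  obtain ⟨U, hSU, hUr, hsum⟩ := exists_cover_of_hausdorffContent_eq_zero hs hS hε hr
  rw [zero_add]
  exact (iInf₂_le_of_le U hSU (iInf_le _ hUr)).trans hsum.le

theorem hausdorffContent_closedBall_le {X : Type*} [PseudoMetricSpace X] {s r : ℝ} (hs : 0 ≤ s)
    (hr : 0 ≤ r) (x : X) :
    hausdorffContent s (closedBall x r) ≤ ENNReal.ofReal ((2 * r) ^ s) := by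
  rw [← ENNReal.ofReal_rpow_of_nonneg (by positivity) hs]
  refine (OuterMeasure.boundedBy_le _).trans (ENNReal.rpow_le_rpow ?_ hs)
  refine ediam_le_of_forall_dist_le fun y hy z hz => ?_
  linarith [dist_triangle_right y z x, mem_closedBall.mp hy, mem_closedBall.mp hz]

theorem exists_le_half_pow_and_rpow_le {s d : ℝ} (hs : 0 < s) (hd₀ : 0 ≤ d) (hd₁ : d ≤ 1)
    {η : ℝ≥0∞} (hη : 0 < η) :
    ∃ k : ℕ, d ≤ (1 / 2) ^ k ∧
      ENNReal.ofReal (((1 / 2 : ℝ) ^ k) ^ s) ≤ ENNReal.ofReal ((2 * d) ^ s) + η := by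
  rcases hd₀.eq_or_lt with rfl | hd_pos
  · have h_tendsto : Tendsto (fun k : ℕ => ENNReal.ofReal (((1 / 2 : ℝ) ^ k) ^ s)) atTop (𝓝 0) := by
      have h_rpow := (Real.continuousAt_rpow_const 0 s (.inr hs.le)).tendsto.comp
        (tendsto_pow_atTop_nhds_zero_of_lt_one (by norm_num) (by norm_num : (1 / 2 : ℝ) < 1))
      simpa [Real.zero_rpow hs.ne'] using ENNReal.tendsto_ofReal h_rpow
    obtain ⟨k, hk⟩ := (h_tendsto.eventually_le_const hη).exists
    exact ⟨k, by positivity, hk.trans le_add_self⟩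
  · obtain ⟨k, hk_lt, hk_le⟩ :=
      exists_nat_pow_near_of_lt_one hd_pos hd₁ (by norm_num : (0 : ℝ) < 1 / 2) (by norm_num)
    refine ⟨k, hk_le, le_add_right (ENNReal.ofReal_le_ofReal ?_)⟩
    exact Real.rpow_le_rpow (by positivity) (by linarith [pow_succ (1 / 2 : ℝ) k]) hs.le

theorem exists_subset_closedBall_half_pow {X : Type*} [PseudoMetricSpace X] [Nonempty X] {s : ℝ}
    (hs : 0 < s) {U : Set X} (hU : ediam U ≤ 1) {η : ℝ≥0∞} (hη : 0 < η) :
    ∃ (x : X) (k : ℕ), U ⊆ closedBall x ((1 / 2) ^ k) ∧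
      ENNReal.ofReal (((1 / 2 : ℝ) ^ k) ^ s) ≤
        ENNReal.ofReal (2 ^ s) * (⨆ _ : U.Nonempty, ediam U ^ s) + η := by
  have hU_top : ediam U ≠ ⊤ := ne_top_of_le_ne_top ENNReal.one_ne_top hU
  have hU_diam : diam U ≤ 1 := ENNReal.toReal_le_of_le_ofReal zero_le_one (by simpa using hU)
  obtain ⟨k, hk_diam, hk⟩ := exists_le_half_pow_and_rpow_le hs diam_nonneg hU_diam hη
  rcases U.eq_empty_or_nonempty with rfl | ⟨x, hx⟩
  · exact ⟨Classical.arbitrary X, k, empty_subset _, by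
      simpa [Real.zero_rpow hs.ne'] using hk⟩
  · refine ⟨x, k, fun y hy => (dist_le_diam_of_mem' hU_top hy hx).trans hk_diam, ?_⟩
    have h_diam : ENNReal.ofReal (diam U ^ s) = ediam U ^ s := by
      rw [← ENNReal.ofReal_rpow_of_nonneg diam_nonneg hs.le, diam, ENNReal.ofReal_toReal hU_top]
    rwa [Real.mul_rpow zero_le_two diam_nonneg, ENNReal.ofReal_mul (by positivity), h_diam,
      ← ciSup_pos (f := fun _ => ediam U ^ s) (⟨x, hx⟩ : U.Nonempty)] at hk

theorem exists_cover_closedBall_half_pow {X : Type*} [PseudoMetricSpace X] [Nonempty X] {s : ℝ}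
    (hs : 0 < s) {S : Set X} (hS : hausdorffContent s S = 0) {ε : ℝ≥0∞} (hε : 0 < ε) :
    ∃ (x : ℕ → X) (k : ℕ → ℕ), S ⊆ ⋃ i, closedBall (x i) ((1 / 2) ^ k i) ∧
      ∑' i, ENNReal.ofReal (((1 / 2 : ℝ) ^ k i) ^ s) ≤ ε := by
  have hε₂ : 0 < ε / 2 := ENNReal.half_pos hε.ne'
  have h2s : ENNReal.ofReal (2 ^ s) ≠ 0 := (ENNReal.ofReal_pos.mpr (by positivity)).ne'
  obtain ⟨U, hSU, hU, hsum⟩ := exists_cover_of_hausdorffContent_eq_zero hs hS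
    (ENNReal.div_pos hε₂.ne' (ENNReal.ofReal_ne_top (r := 2 ^ s))) one_pos
  obtain ⟨η, hη, hη_sum⟩ := ENNReal.exists_pos_sum_of_countable hε₂.ne' ℕ
  choose x k hball hpow using fun i =>
    exists_subset_closedBall_half_pow hs (hU i) (ENNReal.coe_pos.mpr (hη i))
  refine ⟨x, k, hSU.trans (iUnion_mono hball), ?_⟩
  calc ∑' i, ENNReal.ofReal (((1 / 2 : ℝ) ^ k i) ^ s)
      ≤ ∑' i, (ENNReal.ofReal (2 ^ s) * (⨆ _ : (U i).Nonempty, ediam (U i) ^ s) + η i) :=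
        ENNReal.tsum_le_tsum hpow
    _ = ENNReal.ofReal (2 ^ s) * (∑' i, ⨆ _ : (U i).Nonempty, ediam (U i) ^ s) + ∑' i, ↑(η i) := by
        rw [ENNReal.tsum_add, ENNReal.tsum_mul_left]
    _ ≤ ENNReal.ofReal (2 ^ s) * (ε / 2 / ENNReal.ofReal (2 ^ s)) + ε / 2 := by
        gcongr
    _ = ε := by
        rw [ENNReal.mul_div_cancel h2s ENNReal.ofReal_ne_top, ENNReal.add_halves]

theorem exists_finset_cover_by_scale {X : Type*} [PseudoMetricSpace X] [Nonempty X] {s : ℝ}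
    (hs : 0 < s) {S : Set X} (hS : hausdorffContent s S = 0) {ε : ℝ} (hε : 0 < ε) :
    ∃ (x : ℕ → X) (I : ℕ → Finset ℕ), S ⊆ ⋃ k, ⋃ i ∈ I k, closedBall (x i) ((1 / 2) ^ k) ∧
      ∀ k, (I k).card * ((1 / 2 : ℝ) ^ k) ^ s ≤ ε := by
  obtain ⟨x, κ, hS_cover, hsum⟩ :=
    exists_cover_closedBall_half_pow hs hS (ENNReal.ofReal_pos.mpr hε)
  have h_pos : ∀ k : ℕ, 0 < ((1 / 2 : ℝ) ^ k) ^ s := fun k => by positivity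
  choose h_fin h_card using fun k => ENNReal.finset_card_const_le_le_of_tsum_le
    ENNReal.ofReal_ne_top hsum (ENNReal.ofReal_pos.mpr (h_pos k)).ne'
  refine ⟨x, fun k => (h_fin k).toFinset, hS_cover.trans (iUnion_subset fun i => ?_), fun k => ?_⟩
  · exact (subset_biUnion_of_mem (u := fun j => closedBall (x j) ((1 / 2) ^ κ i))
      ((h_fin (κ i)).mem_toFinset.mpr (mem_ofPred_eq ▸ le_rfl))).trans
      (subset_iUnion (fun k => ⋃ j ∈ (h_fin k).toFinset, closedBall (x j) ((1 / 2) ^ k)) (κ i))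
  · have h := h_card k
    rw [← ENNReal.ofReal_div_of_pos (h_pos k), ← ENNReal.ofReal_natCast,
      ENNReal.ofReal_le_ofReal_iff (by positivity)] at h
    exact (le_div_iff₀ (h_pos k)).mp h

theorem hausdorffContent_eq_zero_of_dimH_lt {X : Type*} [EMetricSpace X] {s : ℝ≥0} {S : Set X}
    (h : dimH S < s) : hausdorffContent s S = 0 := by
  borelize X
  exact (hausdorffContent_eq_zero_iff (NNReal.coe_pos.mpr
    (ENNReal.coe_pos.mp (bot_le.trans_lt h)))).mpr (hausdorffMeasure_of_dimH_lt h)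

theorem dimH_le_of_hausdorffContent_eq_zero {X : Type*} [EMetricSpace X] {s : ℝ≥0} (hs : 0 < s)
    {S : Set X} (h : hausdorffContent s S = 0) : dimH S ≤ s := by
  borelize X
  rw [hausdorffContent_eq_zero_iff (NNReal.coe_pos.mpr hs)] at h
  exact dimH_le_of_hausdorffMeasure_ne_top (h.trans_ne ENNReal.zero_ne_top)

end HausdorffContent

section UpperBound

open Metric Set Module
open scoped ENNReal NNReal

variable {V : Type*} [NormedAddCommGroup V] [NormedSpace ℝ V] [FiniteDimensional ℝ V]

theorem card_mul_pow_finrank_le_of_pairwiseDisjoint {r R : ℝ} (hr : 0 ≤ r) (hR : 0 ≤ R)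
    {N : Finset V} (h_disj : (N : Set V).PairwiseDisjoint (closedBall · r))
    (h_sub : ∀ b ∈ N, closedBall b r ⊆ closedBall 0 R) :
    (N.card : ℝ) * r ^ finrank ℝ V ≤ R ^ finrank ℝ V := by
  borelize V
  let μ : Measure V := Measure.addHaar
  have hμ : 0 < μ.real (ball 0 1) :=
    ENNReal.toReal_pos (measure_ball_pos μ 0 one_pos).ne' measure_ball_lt_top.ne
  refine le_of_mul_le_mul_right ?_ hμ
  calc N.card * r ^ finrank ℝ V * μ.real (ball 0 1)
      = ∑ b ∈ N, μ.real (closedBall b r) := by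
        simp [μ.addHaar_real_closedBall _ hr, mul_assoc]
    _ = μ.real (⋃ b ∈ N, closedBall b r) :=
        (measureReal_biUnion_finset h_disj (fun b _ => measurableSet_closedBall)
          (fun b _ => measure_closedBall_lt_top.ne)).symm
    _ ≤ μ.real (closedBall 0 R) :=
        measureReal_mono (iUnion₂_subset h_sub) measure_closedBall_lt_top.ne
    _ = R ^ finrank ℝ V * μ.real (ball 0 1) := μ.addHaar_real_closedBall _ hR

theorem exists_finset_closedBall_subset_iUnion_closedBall {r R : ℝ} (hr : 0 < r) (hr₁ : r ≤ 1)
    (hR : 0 ≤ R) :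
    ∃ N : Finset V, closedBall (0 : V) R ⊆ ⋃ b ∈ N, closedBall b r ∧
      (N.card : ℝ) * r ^ finrank ℝ V ≤ (5 * (R + 1)) ^ finrank ℝ V := by
  obtain ⟨u, hu, hu_disj, hu_cover⟩ :=
    Vitali.exists_disjoint_subfamily_covering_enlargement_closedBall (closedBall (0 : V) R) id
      (fun _ => r / 5) (r / 5) (fun _ _ => le_rfl) 5 (by norm_num)
  have h_card : ∀ N : Finset V, ↑N ⊆ u →
      (N.card : ℝ) * (r / 5) ^ finrank ℝ V ≤ (R + 1) ^ finrank ℝ V := fun N hN =>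
    card_mul_pow_finrank_le_of_pairwiseDisjoint (by positivity) (by positivity)
      (hu_disj.subset hN) fun b hb => closedBall_subset_closedBall' (by
        linarith [mem_closedBall.mp (hu (hN hb))])
  have hu_fin : u.Finite := by
    by_contra h_inf
    obtain ⟨n, hn⟩ := exists_nat_gt ((R + 1) ^ finrank ℝ V / (r / 5) ^ finrank ℝ V)
    obtain ⟨N, hN, rfl⟩ := Set.Infinite.exists_subset_card_eq h_inf n
    exact (h_card N hN).not_gt ((div_lt_iff₀ (by positivity)).mp hn)
  refine ⟨hu_fin.toFinset, fun a ha => ?_, ?_⟩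
  · obtain ⟨b, hb, hab⟩ := hu_cover a ha
    refine mem_biUnion (hu_fin.mem_toFinset.mpr hb) ?_
    simpa [mul_div_cancel₀] using hab (mem_closedBall_self (by positivity))
  · have h := h_card hu_fin.toFinset hu_fin.coe_toFinset.subset
    rwa [div_pow, ← mul_div_assoc, div_le_iff₀ (by positivity), mul_comm (_ ^ _), ← mul_pow] at h

variable {X : Type*}

theorem hausdorffContent_closedBall_prod_closedBall_le [PseudoMetricSpace X] {s r R : ℝ}
    (hs : 0 ≤ s) (hr : 0 < r) (hr₁ : r ≤ 1) (hR : 0 ≤ R) (x : X) :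
    hausdorffContent (s + finrank ℝ V) (closedBall x r ×ˢ closedBall (0 : V) R) ≤
      ENNReal.ofReal (2 ^ (s + finrank ℝ V) * (5 * (R + 1)) ^ finrank ℝ V) *
        ENNReal.ofReal (r ^ s) := by
  obtain ⟨N, hN_cover, hN_card⟩ :=
    exists_finset_closedBall_subset_iUnion_closedBall (V := V) hr hr₁ hR
  have h_cover : closedBall x r ×ˢ closedBall (0 : V) R ⊆ ⋃ b ∈ N, closedBall (x, b) r := by
    simp_rw [← closedBall_prod_same, ← prod_iUnion₂]
    exact prod_mono_right hN_cover
  calc hausdorffContent (s + finrank ℝ V) (closedBall x r ×ˢ closedBall (0 : V) R)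
      ≤ ∑ b ∈ N, hausdorffContent (s + finrank ℝ V) (closedBall (x, b) r) :=
        (measure_mono h_cover).trans (measure_biUnion_finset_le _ _)
    _ ≤ ∑ _b ∈ N, ENNReal.ofReal ((2 * r) ^ (s + finrank ℝ V)) :=
        Finset.sum_le_sum fun b _ => hausdorffContent_closedBall_le (by positivity) hr.le _
    _ = ENNReal.ofReal (2 ^ (s + finrank ℝ V) * (N.card * r ^ finrank ℝ V) * r ^ s) := by
        rw [Finset.sum_const, ← ENNReal.ofReal_nsmul, nsmul_eq_mul,
          Real.mul_rpow zero_le_two hr.le, Real.rpow_add hr, Real.rpow_natCast]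
        ring_nf
    _ ≤ ENNReal.ofReal (2 ^ (s + finrank ℝ V) * (5 * (R + 1)) ^ finrank ℝ V) *
          ENNReal.ofReal (r ^ s) := by
        rw [← ENNReal.ofReal_mul (by positivity)]
        gcongr

theorem hausdorffContent_prod_closedBall_eq_zero [PseudoMetricSpace X] {s R : ℝ} (hs : 0 < s)
    (hR : 0 ≤ R) {E : Set X} (hE : hausdorffContent s E = 0) :
    hausdorffContent (s + finrank ℝ V) (E ×ˢ closedBall (0 : V) R) = 0 := by
  rcases E.eq_empty_or_nonempty with rfl | ⟨x₀, -⟩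
  · simp
  have : Nonempty X := ⟨x₀⟩
  let C := ENNReal.ofReal (2 ^ (s + finrank ℝ V) * (5 * (R + 1)) ^ finrank ℝ V)
  have hC : C ≠ 0 := (ENNReal.ofReal_pos.mpr (by positivity)).ne'
  refine le_zero_iff.mp (le_of_forall_pos_le_add fun ε hε => ?_)
  obtain ⟨x, k, hE_cover, hsum⟩ := exists_cover_closedBall_half_pow hs hE
    (ENNReal.div_pos hε.ne' (ENNReal.ofReal_ne_top : C ≠ ⊤))
  calc hausdorffContent (s + finrank ℝ V) (E ×ˢ closedBall (0 : V) R)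
      ≤ ∑' i, hausdorffContent (s + finrank ℝ V)
          (closedBall (x i) ((1 / 2) ^ k i) ×ˢ closedBall (0 : V) R) := by
        refine (measure_mono ?_).trans (measure_iUnion_le _)
        rw [← iUnion_prod_const]
        exact prod_mono_left hE_cover
    _ ≤ ∑' i, C * ENNReal.ofReal (((1 / 2 : ℝ) ^ k i) ^ s) :=
        ENNReal.tsum_le_tsum fun i => hausdorffContent_closedBall_prod_closedBall_le hs.le
          (by positivity) (pow_le_one₀ (by norm_num) (by norm_num)) hR (x i)
    _ ≤ C * (ε / C) := by
        rw [ENNReal.tsum_mul_left]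
        gcongr
    _ = 0 + ε := by
        rw [ENNReal.mul_div_cancel hC ENNReal.ofReal_ne_top, zero_add]

theorem hausdorffContent_prod_univ_eq_zero [PseudoMetricSpace X] {s : ℝ} (hs : 0 < s)
    {E : Set X} (hE : hausdorffContent s E = 0) :
    hausdorffContent (s + finrank ℝ V) (E ×ˢ (univ : Set V)) = 0 := by
  rw [← iUnion_closedBall_nat (0 : V), prod_iUnion]
  exact measure_iUnion_null fun n => hausdorffContent_prod_closedBall_eq_zero hs n.cast_nonneg hE

theorem dimH_prod_univ_le [MetricSpace X] (E : Set X) :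
    dimH (E ×ˢ (univ : Set V)) ≤ dimH E + finrank ℝ V := by
  refine ENNReal.le_of_forall_pos_le_add fun ε hε h_lt_top => ?_
  lift dimH E to ℝ≥0 using ne_top_of_le_ne_top h_lt_top.ne le_self_add with d hd
  have hd_lt : dimH E < ↑(d + ε) := by
    rw [← hd]
    exact_mod_cast lt_add_of_pos_right d hε
  have h_pos : 0 < d + ε := add_pos_of_nonneg_of_pos d.2 hε
  have h_content : hausdorffContent ((d + ε + finrank ℝ V : ℝ≥0) : ℝ) (E ×ˢ (univ : Set V)) = 0 :=
    hausdorffContent_prod_univ_eq_zero (s := ↑(d + ε)) (by exact_mod_cast h_pos)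
      (hausdorffContent_eq_zero_of_dimH_lt hd_lt)
  refine (dimH_le_of_hausdorffContent_eq_zero (by positivity) h_content).trans_eq ?_
  push_cast
  ring

end UpperBound

section FiniteFrostman

open Metric Set
open scoped ENNReal NNReal

-- Raising the weight of `a` alone by the least slack among the constraints containing `a` violates
-- none of them and makes one of them tight.
theorem exists_le_weights_saturating {X ι : Type*} {C : Finset ι}
    {B : ι → Finset X} {d : ι → ℝ≥0} {w : X → ℝ≥0} (hw : ∀ c ∈ C, ∑ x ∈ B c, w x ≤ d c) {a : X}
    (ha : ∃ c ∈ C, a ∈ B c) :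
    ∃ w' : X → ℝ≥0, w ≤ w' ∧ (∀ c ∈ C, ∑ x ∈ B c, w' x ≤ d c) ∧
      ∃ c ∈ C, a ∈ B c ∧ ∑ x ∈ B c, w' x = d c := by
  classical
  obtain ⟨c₁, hc₁, hac₁⟩ := ha
  obtain ⟨c₀, hc₀, h_min⟩ := (C.filter (a ∈ B ·)).exists_min_image
    (fun c => d c - ∑ x ∈ B c, w x) ⟨c₁, Finset.mem_filter.mpr ⟨hc₁, hac₁⟩⟩
  rw [Finset.mem_filter] at hc₀
  let slack := d c₀ - ∑ x ∈ B c₀, w x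
  have h_sum : ∀ c, ∑ x ∈ B c, (w + Pi.single a slack : X → ℝ≥0) x =
      ∑ x ∈ B c, w x + if a ∈ B c then slack else 0 := fun c => by
    simp only [Pi.add_apply, Finset.sum_add_distrib, Finset.sum_pi_single']
  refine ⟨w + Pi.single a slack, le_self_add, fun c hc => ?_, c₀, hc₀.1, hc₀.2, ?_⟩
  · rw [h_sum]
    split_ifs with hac
    · calc ∑ x ∈ B c, w x + slack
          ≤ ∑ x ∈ B c, w x + (d c - ∑ x ∈ B c, w x) := by
            gcongr
            exact h_min c (Finset.mem_filter.mpr ⟨hc, hac⟩)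
        _ = d c := add_tsub_cancel_of_le (hw c hc)
    · simpa using hw c hc
  · rw [h_sum, if_pos hc₀.2, add_tsub_cancel_of_le (hw c₀ hc₀.1)]

theorem exists_weights_saturating {X ι : Type*} (C : Finset ι)
    (B : ι → Finset X) (d : ι → ℝ≥0) (A : Finset X) (hA : ∀ a ∈ A, ∃ c ∈ C, a ∈ B c) :
    ∃ w : X → ℝ≥0, (∀ c ∈ C, ∑ x ∈ B c, w x ≤ d c) ∧
      ∀ a ∈ A, ∃ c ∈ C, a ∈ B c ∧ ∑ x ∈ B c, w x = d c := by
  classical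
  induction A using Finset.induction with
  | empty => exact ⟨0, by simp, by simp⟩
  | insert a A _ ih =>
    obtain ⟨w, hw, hw_sat⟩ := ih fun b hb => hA b (Finset.mem_insert_of_mem hb)
    obtain ⟨w', hww', hw', ha⟩ := exists_le_weights_saturating hw
      (hA a (Finset.mem_insert_self a A))
    refine ⟨w', hw', (Finset.forall_mem_insert _ _ _).mpr ⟨ha, fun b hb => ?_⟩⟩
    obtain ⟨c, hc, hbc, h_eq⟩ := hw_sat b hb
    refine ⟨c, hc, hbc, (hw' c hc).antisymm ?_⟩
    exact h_eq.symm.trans_le (Finset.sum_le_sum fun x _ => hww' x)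

variable {X : Type*} [PseudoMetricSpace X]

theorem sum_sum_filter_dist_le_of_pairwiseDisjoint {ι : Type*} {u : Finset ι} {c : ι → X}
    {r : ι → ℝ} (hu : (u : Set ι).PairwiseDisjoint fun b => closedBall (c b) (r b)) (A : Finset X)
    (w : X → ℝ≥0) :
    ∑ b ∈ u, ∑ y ∈ A with dist y (c b) ≤ r b, (w y : ℝ) ≤ ∑ x ∈ A, (w x : ℝ) := by
  classical
  have h_disj : (u : Set ι).PairwiseDisjoint fun b => {y ∈ A | dist y (c b) ≤ r b} :=
    fun a ha b hb hab => Finset.disjoint_left.mpr fun y hya hyb =>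
      Set.disjoint_left.mp (hu ha hb hab) (Finset.mem_filter.mp hya).2 (Finset.mem_filter.mp hyb).2
  rw [← Finset.sum_biUnion h_disj]
  gcongr
  exact Finset.biUnion_subset.mpr fun b _ => Finset.filter_subset _ _

theorem hausdorffContent_le_sum_of_saturated {s : ℝ} (hs : 0 ≤ s) {k : ℕ} {A : Finset X}
    {S : Set X} (hS : S ⊆ ⋃ x ∈ A, closedBall x ((1 / 2) ^ k)) {w : X → ℝ≥0}
    (hw : ∀ x ∈ A, ∃ c, ∃ j ≤ k, dist x c ≤ (1 / 2) ^ j ∧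
      ∑ y ∈ A with dist y c ≤ (1 / 2) ^ j, (w y : ℝ) = ((1 / 2 : ℝ) ^ j) ^ s) :
    hausdorffContent s S ≤ ENNReal.ofReal (12 ^ s * ∑ x ∈ A, (w x : ℝ)) := by
  -- The saturated balls of a Vitali subfamily are disjoint, so their masses add up to at most the
  -- total weight; the balls of radius `6 · 2⁻ʲ` about the same centres cover `S`.
  choose! c j hjk hxc h_sat using hw
  obtain ⟨u, hu, hu_disj, hu_cover⟩ :=
    Vitali.exists_disjoint_subfamily_covering_enlargement_closedBall (A : Set X) c
      (fun x => (1 / 2) ^ j x) 1 (fun _ _ => pow_le_one₀ (by norm_num) (by norm_num)) 5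
      (by norm_num)
  lift u to Finset X using A.finite_toSet.subset hu
  have h_cover : S ⊆ ⋃ b ∈ u, closedBall (c b) (6 * (1 / 2) ^ j b) := fun y hy => by
    obtain ⟨x, hx, hyx⟩ := mem_iUnion₂.mp (hS hy)
    obtain ⟨b, hb, h_sub⟩ := hu_cover x hx
    have hxb : dist x (c b) ≤ 5 * (1 / 2) ^ j b := h_sub (hxc x hx)
    have hkb : (1 / 2 : ℝ) ^ k ≤ (1 / 2) ^ j b :=
      pow_le_pow_of_le_one (by norm_num) (by norm_num) (hjk b (hu hb))
    refine mem_biUnion hb (mem_closedBall.mpr ?_)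
    linarith [dist_triangle y x (c b), mem_closedBall.mp hyx]
  calc hausdorffContent s S
      ≤ ∑ b ∈ u, hausdorffContent s (closedBall (c b) (6 * (1 / 2) ^ j b)) :=
        (measure_mono h_cover).trans (measure_biUnion_finset_le _ _)
    _ ≤ ∑ b ∈ u, ENNReal.ofReal ((2 * (6 * (1 / 2) ^ j b)) ^ s) :=
        Finset.sum_le_sum fun b _ => hausdorffContent_closedBall_le hs (by positivity) _
    _ = ENNReal.ofReal
          (12 ^ s * ∑ b ∈ u, ∑ y ∈ A with dist y (c b) ≤ (1 / 2) ^ j b, (w y : ℝ)) := by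
        rw [← ENNReal.ofReal_sum_of_nonneg fun _ _ => by positivity, Finset.mul_sum]
        congr 1
        refine Finset.sum_congr rfl fun b hb => ?_
        rw [h_sat b (hu hb), ← mul_assoc, Real.mul_rpow (by norm_num) (by positivity)]
        norm_num
    _ ≤ ENNReal.ofReal (12 ^ s * ∑ x ∈ A, (w x : ℝ)) := by
        gcongr
        exact sum_sum_filter_dist_le_of_pairwiseDisjoint hu_disj A w

theorem exists_frostman_weights {s : ℝ} (hs : 0 ≤ s) {S : Set X} (hS : TotallyBounded S)
    (k : ℕ) :
    ∃ (A : Finset X) (w : X → ℝ≥0), ↑A ⊆ S ∧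
      (∀ x ∈ A, ∀ j ≤ k,
        ∑ y ∈ A with dist y x ≤ (1 / 2) ^ j, (w y : ℝ) ≤ ((1 / 2 : ℝ) ^ j) ^ s) ∧
      hausdorffContent s S ≤ ENNReal.ofReal (12 ^ s * ∑ x ∈ A, (w x : ℝ)) := by
  classical
  obtain ⟨A, hAS, hA_fin, hS_cover⟩ :=
    finite_approx_of_totallyBounded hS ((1 / 2) ^ k) (by positivity)
  lift A to Finset X using hA_fin
  let B : X × ℕ → Finset X := fun c => {y ∈ A | dist y c.1 ≤ (1 / 2) ^ c.2}
  obtain ⟨w, hw, hw_sat⟩ := exists_weights_saturating (A ×ˢ Finset.range (k + 1)) B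
    (fun c => ((1 / 2) ^ c.2) ^ s) A fun a ha => ⟨(a, 0), by simp [ha], by simp [B, ha]⟩
  refine ⟨A, w, hAS, fun x hx j hj => ?_, ?_⟩
  · exact_mod_cast hw (x, j) (Finset.mk_mem_product hx (Finset.mem_range_succ_iff.mpr hj))
  · refine hausdorffContent_le_sum_of_saturated hs (hS_cover.trans
      (iUnion₂_mono fun _ _ => ball_subset_closedBall)) fun x hx => ?_
    obtain ⟨⟨c, j⟩, hcj, hxB, h_eq⟩ := hw_sat x hx
    exact ⟨c, j, Finset.mem_range_succ_iff.mp (Finset.mem_product.mp hcj).2,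
      (Finset.mem_filter.mp hxB).2, by simpa [B] using congrArg NNReal.toReal h_eq⟩

end FiniteFrostman

section Energy

open scoped NNReal

theorem exists_half_pow_near {r : ℝ} (hr : r ≤ 1) (k : ℕ) :
    ∃ j ≤ k, r ≤ (1 / 2) ^ j ∧ (1 / 2) ^ j ≤ 2 * max r ((1 / 2) ^ k) := by
  obtain ⟨j, hj_lt, hj_le⟩ := exists_nat_pow_near_of_lt_one
    (lt_max_of_lt_right (by positivity) : 0 < max r ((1 / 2) ^ k))
    (max_le hr (pow_le_one₀ (by norm_num) (by norm_num)))
    (by norm_num : (0 : ℝ) < 1 / 2) (by norm_num)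
  refine ⟨j, ?_, (le_max_left _ _).trans hj_le, ?_⟩
  · exact (pow_le_pow_iff_right_of_lt_one₀ (by norm_num) (by norm_num)).mp
      ((le_max_right _ _).trans hj_le)
  · linarith [pow_succ (1 / 2 : ℝ) j]

theorem sum_mul_le_mul_rpow_of_le {X : Type*} {s : ℝ} (hs : s ≤ 1) {B : Finset X} {w : X → ℝ≥0}
    {r ρ : ℝ} (hρ : 0 < ρ) (hρr : ρ ≤ r) (hw : ∑ y ∈ B, (w y : ℝ) ≤ r ^ s) {g : X → ℝ} {M : ℝ}
    (hM : 0 ≤ M) (hg : ∀ y ∈ B, r * g y ≤ M * ρ) : ∑ y ∈ B, w y * g y ≤ M * ρ ^ s := by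
  have hr : 0 < r := hρ.trans_le hρr
  have hg_le : ∀ y ∈ B, g y ≤ M * ρ / r := fun y hy => by
    rw [le_div_iff₀ hr, mul_comm]
    exact hg y hy
  calc ∑ y ∈ B, w y * g y
      ≤ ∑ y ∈ B, w y * (M * ρ / r) :=
        Finset.sum_le_sum fun y hy => mul_le_mul_of_nonneg_left (hg_le y hy) (w y).2
    _ ≤ r ^ s * (M * ρ / r) := by
        rw [← Finset.sum_mul]
        gcongr
    _ = M * ρ * r ^ (s - 1) := by
        rw [Real.rpow_sub_one hr.ne']
        ring
    _ ≤ M * ρ * ρ ^ (s - 1) := by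
        gcongr ?_ * ?_
        exact Real.rpow_le_rpow_of_nonpos hρ hρr (by linarith)
    _ = M * ρ ^ s := by
        rw [Real.rpow_sub_one hρ.ne']
        field_simp

theorem sum_mul_le_of_frostman {X : Type*} [PseudoMetricSpace X] {s : ℝ} (hs : s ≤ 1) {k : ℕ}
    {A : Finset X} {w : X → ℝ≥0} {x : X}
    (hw : ∀ j ≤ k, ∑ y ∈ A with dist y x ≤ (1 / 2) ^ j, (w y : ℝ) ≤ ((1 / 2 : ℝ) ^ j) ^ s)
    (hA : ∀ y ∈ A, dist y x ≤ 1) {g : X → ℝ} (hg₀ : ∀ y ∈ A, 0 ≤ g y) {M : ℝ} (hM : 0 ≤ M)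
    (hg : ∀ y ∈ A, max (dist y x) ((1 / 2) ^ k) * g y ≤ M * (1 / 2) ^ k) :
    ∑ y ∈ A, w y * g y ≤ (k + 1) * (2 * M * ((1 / 2 : ℝ) ^ k) ^ s) := by
  choose! j hjk hj_dist hj_le using fun y hy => exists_half_pow_near (hA y hy) k
  have h_shell : ∀ i ≤ k,
      ∑ y ∈ A with j y = i, w y * g y ≤ 2 * M * ((1 / 2 : ℝ) ^ k) ^ s := fun i hi => by
    refine sum_mul_le_mul_rpow_of_le hs (r := (1 / 2) ^ i) (by positivity)
      (pow_le_pow_of_le_one (by norm_num) (by norm_num) hi) ?_ (by positivity) fun y hy => ?_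
    · refine le_trans (Finset.sum_le_sum_of_subset_of_nonneg (fun y hy => ?_)
        fun _ _ _ => NNReal.coe_nonneg _) (hw i hi)
      simp only [Finset.mem_filter] at hy ⊢
      exact ⟨hy.1, hy.2 ▸ hj_dist y hy.1⟩
    · obtain ⟨hyA, rfl⟩ := Finset.mem_filter.mp hy
      linarith [mul_le_mul_of_nonneg_right (hj_le y hyA) (hg₀ y hyA), hg y hyA]
  rw [← Finset.sum_fiberwise_of_maps_to (t := Finset.range (k + 1))
    (fun y hy => Finset.mem_range_succ_iff.mpr (hjk y hy))]
  refine (Finset.sum_le_card_nsmul _ _ _ fun i hi =>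
    h_shell i (Finset.mem_range_succ_iff.mp hi)).trans_eq ?_
  simp [nsmul_eq_mul]

end Energy

section CauchySchwarz

open Set
open scoped ENNReal NNReal

theorem sq_lintegral_le_of_sq_le {Y : Type*} [MeasurableSpace Y] {μ : Measure Y}
    {f u v : Y → ℝ≥0∞} (hu : AEMeasurable u μ) (hv : AEMeasurable v μ)
    (h : ∀ y, f y ^ 2 ≤ u y * v y) : (∫⁻ y, f y ∂μ) ^ 2 ≤ (∫⁻ y, u y ∂μ) * ∫⁻ y, v y ∂μ := by
  have h_half : ∀ a b c : ℝ≥0∞, a ^ 2 ≤ b * c ↔ a ≤ b ^ (1 / 2 : ℝ) * c ^ (1 / 2 : ℝ) :=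
    fun a b c => by
      rw [← ENNReal.mul_rpow_of_nonneg _ _ (by norm_num), one_div,
        ENNReal.le_rpow_inv_iff two_pos, ENNReal.rpow_two]
  rw [h_half]
  exact (lintegral_mono fun y => (h_half _ _ _).mp (h y)).trans
    (ENNReal.lintegral_mul_norm_pow_le hu hv (by norm_num) (by norm_num) (by norm_num))

theorem sq_sum_le_card_mul_sum_sum_filter {X ι R : Type*} [CommSemiring R] [LinearOrder R]
    [IsStrictOrderedRing R] [ExistsAddOfLE R] [DecidableEq ι] {G : Finset X} {I : Finset ι}
    {g : X → ι} (hg : ∀ p ∈ G, g p ∈ I) (w : X → R) :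
    (∑ p ∈ G, w p) ^ 2 ≤ I.card * ∑ p ∈ G, ∑ q ∈ G with g q = g p, w p * w q := by
  calc (∑ p ∈ G, w p) ^ 2
      = (∑ i ∈ I, ∑ p ∈ G with g p = i, w p) ^ 2 := by rw [Finset.sum_fiberwise_of_maps_to hg]
    _ ≤ I.card * ∑ i ∈ I, (∑ p ∈ G with g p = i, w p) ^ 2 := sq_sum_le_card_mul_sum_sq
    _ = I.card * ∑ i ∈ I, ∑ p ∈ G with g p = i, ∑ q ∈ G with g q = g p, w p * w q := by
        congr 1
        refine Finset.sum_congr rfl fun i _ => ?_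
        rw [sq, Finset.sum_mul_sum]
        refine Finset.sum_congr rfl fun p hp => ?_
        rw [(Finset.mem_filter.mp hp).2]
    _ = I.card * ∑ p ∈ G, ∑ q ∈ G with g q = g p, w p * w q := by
        rw [Finset.sum_fiberwise_of_maps_to hg]

theorem sq_sum_indicator_biUnion_le {X Y ι : Type*} {A : Finset X} {I : Finset ι} (w : X → ℝ≥0)
    {H : ι → X → Set Y} {J : ι → Set Y} {D : X → X → Set Y} (hHJ : ∀ i p, H i p ⊆ J i)
    (hHD : ∀ i p q, H i p ∩ H i q ⊆ D p q) (y : Y) :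
    (∑ p ∈ A, (⋃ i ∈ I, H i p).indicator (fun _ => (w p : ℝ≥0∞)) y) ^ 2 ≤
      (∑ i ∈ I, (J i).indicator 1 y) *
        ∑ p ∈ A, ∑ q ∈ A, (D p q).indicator (fun _ => (w p * w q : ℝ≥0∞)) y := by
  classical
  rcases isEmpty_or_nonempty ι
  · simp
  let G := A.filter (y ∈ ⋃ i ∈ I, H i ·)
  have hG : ∀ p ∈ G, ∃ i ∈ I, y ∈ H i p := fun p hp => by
    simpa using (Finset.mem_filter.mp hp).2
  -- Keeping a single index `g p` per `p` makes the fibres of `g` disjoint, so that a pair `(p, q)`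
  -- is counted once and not once for each `i` with `y ∈ H i p ∩ H i q`.
  choose! g hgI hgH using hG
  calc (∑ p ∈ A, (⋃ i ∈ I, H i p).indicator (fun _ => (w p : ℝ≥0∞)) y) ^ 2
      = ((∑ p ∈ G, w p : ℝ≥0) ^ 2 : ℝ≥0) := by
        push_cast
        simp only [G, Finset.sum_filter, indicator_apply]
    _ ≤ (((I.filter (y ∈ J ·)).card * ∑ p ∈ G, ∑ q ∈ G with g q = g p, w p * w q : ℝ≥0) : ℝ≥0∞) :=
        ENNReal.coe_le_coe.mpr <| sq_sum_le_card_mul_sum_sum_filter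
          (fun p hp => Finset.mem_filter.mpr ⟨hgI p hp, hHJ _ _ (hgH p hp)⟩) w
    _ ≤ (((I.filter (y ∈ J ·)).card *
          ∑ p ∈ A, ∑ q ∈ A with y ∈ D p q, w p * w q : ℝ≥0) : ℝ≥0∞) := by
        gcongr
        refine (Finset.sum_le_sum fun p hp => Finset.sum_le_sum_of_subset fun q hq => ?_).trans
          (Finset.sum_le_sum_of_subset (Finset.filter_subset _ _))
        obtain ⟨hqG, hgq⟩ := Finset.mem_filter.mp hq
        exact Finset.mem_filter.mpr ⟨(Finset.mem_filter.mp hqG).1,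
          hHD _ p q ⟨hgH p hp, hgq ▸ hgH q hqG⟩⟩
    _ = _ := by
        push_cast
        simp only [Finset.sum_filter, indicator_apply, Pi.one_apply, Finset.sum_boole]

theorem sq_sum_mul_measure_biUnion_le {X Y ι : Type*} [MeasurableSpace Y] (μ : Measure Y)
    {A : Finset X} {I : Finset ι} (w : X → ℝ≥0) {H : ι → X → Set Y} {J : ι → Set Y}
    {D : X → X → Set Y} (hH : ∀ i p, MeasurableSet (H i p)) (hJ : ∀ i, MeasurableSet (J i))
    (hD : ∀ p q, MeasurableSet (D p q)) (hHJ : ∀ i p, H i p ⊆ J i)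
    (hHD : ∀ i p q, H i p ∩ H i q ⊆ D p q) :
    (∑ p ∈ A, w p * μ (⋃ i ∈ I, H i p)) ^ 2 ≤
      (∑ i ∈ I, μ (J i)) * ∑ p ∈ A, ∑ q ∈ A, w p * w q * μ (D p q) := by
  have hJ_ind : ∀ i, Measurable ((J i).indicator (1 : Y → ℝ≥0∞)) := fun i =>
    measurable_one.indicator (hJ i)
  have hD_ind : ∀ p q, Measurable ((D p q).indicator fun _ => (w p * w q : ℝ≥0∞)) := fun p q =>
    measurable_const.indicator (hD p q)
  have hH_union : ∀ p, MeasurableSet (⋃ i ∈ I, H i p) := fun p =>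
    I.measurableSet_biUnion fun i _ => hH i p
  have h := sq_lintegral_le_of_sq_le (μ := μ)
    (Finset.measurable_fun_sum I fun i _ => hJ_ind i).aemeasurable
    (Finset.measurable_fun_sum A fun p _ => Finset.measurable_fun_sum A fun q _ =>
      hD_ind p q).aemeasurable
    (sq_sum_indicator_biUnion_le (A := A) w hHJ hHD)
  rw [lintegral_finsetSum _ fun p _ => measurable_const.indicator (hH_union p),
    lintegral_finsetSum _ fun i _ => hJ_ind i,
    lintegral_finsetSum _ fun p _ => Finset.measurable_fun_sum A fun q _ => hD_ind p q] at h
  simpa only [lintegral_finsetSum _ fun q _ => hD_ind _ q, lintegral_indicator_const (hH_union _),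
    lintegral_indicator_one (hJ _), lintegral_indicator_const (hD _ _)] using h

end CauchySchwarz

section Geometry

open Metric Set Module
open scoped ENNReal NNReal

variable {V : Type*} [NormedAddCommGroup V] [InnerProductSpace ℝ V]

/-- The affine function `x ↦ a · x + b` coded by the point `p = (a, b)`. -/
def affineEval (p : V × ℝ) (x : V) : ℝ :=
  ⟪p.1, x⟫ + p.2

/-- The hyperplane `L(p)` over an arbitrary inner product space: the graph of `affineEval p`. -/
def affineGraph (p : V × ℝ) : Set (V × ℝ) :=
  {q | q.2 = affineEval p q.1}

/-- The part of the slab `{x : |a · x + b| ≤ δ}`, `p = (a, b)`, in the unit ball. For `p = p' - p''`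
this is where the hyperplanes `L(p')` and `L(p'')` are within vertical distance `δ`. -/
def slab (p : V × ℝ) (δ : ℝ) : Set V :=
  {x ∈ closedBall 0 1 | |affineEval p x| ≤ δ}

/-- The base points `x` in the unit ball over which the hyperplane `L(p)` lies in `F`. -/
def graphTrace (F : Set (V × ℝ)) (p : V × ℝ) : Set V :=
  {x ∈ closedBall 0 1 | (x, affineEval p x) ∈ F}

theorem affineEval_sub (p q : V × ℝ) (x : V) :
    affineEval (p - q) x = affineEval p x - affineEval q x := by
  simp only [affineEval, Prod.fst_sub, Prod.snd_sub, inner_sub_left]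
  ring

theorem affineEval_add_smul (p : V × ℝ) (x e : V) (t : ℝ) :
    affineEval p (x + t • e) = ⟪p.1, e⟫ * t + affineEval p x := by
  simp only [affineEval, inner_add_right, inner_smul_right]
  ring

theorem contDiff_affineEval {n : WithTop ℕ∞} :
    ContDiff ℝ n fun z : (V × ℝ) × V => affineEval z.1 z.2 :=
  (contDiff_fst.fst.inner ℝ contDiff_snd).add contDiff_fst.snd

theorem continuous_affineEval (p : V × ℝ) : Continuous (affineEval p) :=
  contDiff_affineEval (n := 0).continuous.comp (Continuous.prodMk_right p)

theorem iUnion_affineGraph_eq_image (E : Set (V × ℝ)) :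
    ⋃ p ∈ E, affineGraph p =
      (fun z : (V × ℝ) × V => (z.2, affineEval z.1 z.2)) '' E ×ˢ univ := by
  ext ⟨x, y⟩
  simp [affineGraph, Prod.ext_iff, eq_comm]

theorem isClosed_slab (p : V × ℝ) (δ : ℝ) : IsClosed (slab p δ) :=
  isClosed_closedBall.inter (isClosed_le (continuous_affineEval p).abs continuous_const)

theorem isClosed_graphTrace {F : Set (V × ℝ)} (hF : IsClosed F) (p : V × ℝ) :
    IsClosed (graphTrace F p) :=
  isClosed_closedBall.inter (hF.preimage (continuous_id.prodMk (continuous_affineEval p)))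

theorem graphTrace_iUnion {ι : Sort*} (F : ι → Set (V × ℝ)) (p : V × ℝ) :
    graphTrace (⋃ i, F i) p = ⋃ i, graphTrace (F i) p := by
  ext x
  simp [graphTrace]

theorem graphTrace_eq_closedBall {F : Set (V × ℝ)} {p : V × ℝ} (h : affineGraph p ⊆ F) :
    graphTrace F p = closedBall 0 1 :=
  sep_eq_self_iff_mem_true.mpr fun _ _ => h rfl

theorem graphTrace_closedBall_subset (z p : V × ℝ) (δ : ℝ) :
    graphTrace (closedBall z δ) p ⊆ closedBall z.1 δ := fun _ hx =>
  mem_closedBall.mpr ((le_max_left _ _).trans hx.2)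

theorem graphTrace_closedBall_inter_subset (z p q : V × ℝ) (δ : ℝ) :
    graphTrace (closedBall z δ) p ∩ graphTrace (closedBall z δ) q ⊆ slab (p - q) (2 * δ) :=
  fun x ⟨hp, hq⟩ => ⟨hp.1, by
    have hp' : dist (affineEval p x) z.2 ≤ δ := (le_max_right _ _).trans hp.2
    have hq' : dist (affineEval q x) z.2 ≤ δ := (le_max_right _ _).trans hq.2
    rw [affineEval_sub, ← Real.dist_eq]
    linarith [dist_triangle_right (affineEval p x) (affineEval q x) z.2]⟩

theorem norm_le_of_slab_nonempty {p : V × ℝ} {δ : ℝ} (h : (slab p δ).Nonempty) :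
    ‖p‖ ≤ ‖p.1‖ + δ := by
  obtain ⟨x, hx, hxδ⟩ := h
  have h_inner : |⟪p.1, x⟫| ≤ ‖p.1‖ := (abs_real_inner_le_norm _ _).trans
    (mul_le_of_le_one_right (norm_nonneg _) (mem_closedBall_zero_iff.mp hx))
  refine max_le (le_add_of_nonneg_right ((abs_nonneg _).trans hxδ)) ?_
  calc ‖p.2‖ = |affineEval p x - ⟪p.1, x⟫| := by
        rw [affineEval, add_sub_cancel_left, Real.norm_eq_abs]
    _ ≤ |affineEval p x| + |⟪p.1, x⟫| := abs_sub _ _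
    _ ≤ ‖p.1‖ + δ := by linarith

theorem volume_abs_mul_add_le {a : ℝ} (ha : 0 < a) (c δ : ℝ) :
    volume {t : ℝ | |a * t + c| ≤ δ} = ENNReal.ofReal (2 * (δ / a)) := by
  rw [← Real.volume_closedBall (-c / a) (δ / a)]
  congr 1
  ext t
  rw [mem_ofPred_eq, mem_closedBall, Real.dist_eq, le_div_iff₀ ha, ← abs_of_pos ha, ← abs_mul,
    abs_of_pos ha]
  congr! 2
  field_simp
  ring

theorem volume_Icc_inter_line_slab_le {p : V × ℝ} {e : V} (he : ‖e‖ = 1) (hpe : 0 < ⟪p.1, e⟫)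
    (δ : ℝ) (x : V) :
    volume {t : ℝ | t ∈ Icc 0 1 ∧ x + t • e ∈ slab p δ} ≤
      (closedBall 0 2).indicator (fun _ => ENNReal.ofReal (2 * (δ / ⟪p.1, e⟫))) x := by
  by_cases hx : x ∈ closedBall (0 : V) 2
  · rw [indicator_of_mem hx, ← volume_abs_mul_add_le hpe (affineEval p x)]
    refine measure_mono fun t ht => ?_
    rw [mem_ofPred_eq, ← affineEval_add_smul]
    exact ht.2.2
  · rw [indicator_of_notMem hx, nonpos_iff_eq_zero]
    convert measure_empty (μ := volume)
    refine eq_empty_of_forall_notMem fun t ht => hx ?_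
    have h_smul : ‖t • e‖ ≤ 1 := by
      rw [norm_smul, he, mul_one, Real.norm_of_nonneg ht.1.1]
      exact ht.1.2
    rw [mem_closedBall_zero_iff]
    linarith [norm_le_add_norm_add x (t • e), mem_closedBall_zero_iff.mp ht.2.1]

variable [FiniteDimensional ℝ V] [MeasurableSpace V] [BorelSpace V] (μ : Measure V)
  [μ.IsAddHaarMeasure]

theorem measure_slab_le {p : V × ℝ} {e : V} (he : ‖e‖ = 1) (hpe : 0 < ⟪p.1, e⟫) (δ : ℝ) :
    μ (slab p δ) ≤ ENNReal.ofReal (2 * (δ / ⟪p.1, e⟫)) * μ (closedBall 0 2) := by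
  -- Translating the slab along `e` for unit time keeps it in the ball of radius `2`, where it meets
  -- each point during a time at most `2δ / ⟪p.1, e⟫`.
  let T : Set (ℝ × V) := {z | z.1 ∈ Icc 0 1 ∧ z.2 + z.1 • e ∈ slab p δ}
  have hT : MeasurableSet T := by
    refine ((isClosed_Icc.preimage continuous_fst).inter
      ((isClosed_slab p δ).preimage ?_)).measurableSet
    fun_prop
  have h_fiber : ∀ t ∈ Icc (0 : ℝ) 1, μ (Prod.mk t ⁻¹' T) = μ (slab p δ) := fun t ht => by
    rw [← measure_preimage_add_right μ (t • e) (slab p δ)]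
    congr 1
    ext x
    simp [T, ht.1, ht.2]
  calc μ (slab p δ) = ∫⁻ _ in Icc (0 : ℝ) 1, μ (slab p δ) := by simp
    _ = ∫⁻ t in Icc (0 : ℝ) 1, μ (Prod.mk t ⁻¹' T) :=
        (setLIntegral_congr_fun measurableSet_Icc h_fiber).symm
    _ ≤ ∫⁻ t, μ (Prod.mk t ⁻¹' T) := setLIntegral_le_lintegral _ _
    _ = ∫⁻ x, volume ((fun t => (t, x)) ⁻¹' T) ∂μ := by
        rw [← Measure.prod_apply hT, Measure.prod_apply_symm hT]
    _ ≤ ENNReal.ofReal (2 * (δ / ⟪p.1, e⟫)) * μ (closedBall 0 2) := by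
        rw [← lintegral_indicator_const measurableSet_closedBall]
        exact lintegral_mono (volume_Icc_inter_line_slab_le he hpe δ)

theorem norm_mul_measureReal_slab_le (p : V × ℝ) {δ : ℝ} (hδ : 0 ≤ δ) :
    ‖p.1‖ * μ.real (slab p δ) ≤ 2 * δ * μ.real (closedBall 0 2) := by
  rcases eq_or_ne p.1 0 with hp | hp
  · rw [hp, norm_zero, zero_mul]
    positivity
  have hp_norm : 0 < ‖p.1‖ := norm_pos_iff.mpr hp
  have h_inner : ⟪p.1, (‖p.1‖⁻¹ : ℝ) • p.1⟫ = ‖p.1‖ := by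
    rw [inner_smul_right, real_inner_self_eq_norm_sq]
    field_simp
  have h := measure_slab_le μ (norm_smul_inv_norm hp) (hp_norm.trans_eq h_inner.symm) δ
  rw [RCLike.ofReal_real_eq_id, id, h_inner] at h
  have h_real := ENNReal.toReal_mono
    (ENNReal.mul_ne_top ENNReal.ofReal_ne_top measure_closedBall_lt_top.ne) h
  rw [ENNReal.toReal_mul, ENNReal.toReal_ofReal (by positivity)] at h_real
  calc ‖p.1‖ * μ.real (slab p δ)
      ≤ ‖p.1‖ * (2 * (δ / ‖p.1‖) * μ.real (closedBall 0 2)) := by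
        gcongr
        exact h_real
    _ = 2 * δ * μ.real (closedBall 0 2) := by field_simp

theorem max_norm_mul_measureReal_slab_le (p : V × ℝ) {δ : ℝ} (hδ : 0 ≤ δ) :
    max ‖p‖ δ * μ.real (slab p δ) ≤ 3 * δ * μ.real (closedBall 0 2) := by
  rcases (slab p δ).eq_empty_or_nonempty with h_empty | h_nonempty
  · rw [h_empty, measureReal_empty, mul_zero]
    positivity
  have h_ball : μ.real (slab p δ) ≤ μ.real (closedBall 0 2) :=
    measureReal_mono (fun x hx => closedBall_subset_closedBall one_le_two hx.1)
      measure_closedBall_lt_top.ne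
  calc max ‖p‖ δ * μ.real (slab p δ)
      ≤ (‖p.1‖ + δ) * μ.real (slab p δ) := by
        gcongr
        exact max_le (norm_le_of_slab_nonempty h_nonempty) (le_add_of_nonneg_left (norm_nonneg _))
    _ ≤ 3 * δ * μ.real (closedBall 0 2) := by
        linarith [norm_mul_measureReal_slab_le μ p hδ, mul_le_mul_of_nonneg_left h_ball hδ]

end Geometry

section LowerBound

open Metric Set Module Filter Topology
open scoped ENNReal NNReal

theorem exists_lt_measure_of_tsum_lt {Y ι : Type*} [MeasurableSpace Y] {μ : Measure Y}
    [Countable ι] {S : ι → Set Y} {θ : ι → ℝ≥0∞} (h : ∑' i, θ i < μ (⋃ i, S i)) :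
    ∃ i, θ i < μ (S i) := by
  by_contra! h_le
  exact h.not_ge ((measure_iUnion_le S).trans (ENNReal.tsum_le_tsum h_le))

theorem exists_summable_thresholds {σ β : ℝ} (hσ : 0 < σ) (hβ : 0 < β) :
    ∃ θ : ℕ → ℝ, (∀ k, 0 < θ k) ∧ Summable θ ∧ ∑' k, θ k < β ∧
      Summable fun k : ℕ => (k + 1) * ((1 / 2 : ℝ) ^ k) ^ σ / θ k ^ 2 := by
  -- With `a ^ 3 = 2 ^ (-σ)` and `θ k` proportional to `a ^ k`, both series decay like `a ^ k`.
  let a : ℝ := (1 / 2) ^ (σ / 3)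
  have ha₀ : 0 < a := by positivity
  have ha₁ : a < 1 := Real.rpow_lt_one (by norm_num) (by norm_num) (by positivity)
  have ha_sub : 0 < 1 - a := sub_pos.mpr ha₁
  have ha_pow : ∀ k : ℕ, ((1 / 2 : ℝ) ^ k) ^ σ = a ^ k * (a ^ k) ^ 2 := fun k => by
    have h_cube : (1 / 2 : ℝ) ^ σ = a ^ 3 := by
      rw [← Real.rpow_mul_natCast (by norm_num)]
      norm_num
    rw [← Real.rpow_natCast_mul (by norm_num), mul_comm, Real.rpow_mul_natCast (by norm_num),
      h_cube]
    ring
  let c : ℝ := β * (1 - a) / 2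
  have hc : 0 < c := by positivity
  refine ⟨fun k => c * a ^ k, fun k => by positivity,
    (summable_geometric_of_lt_one ha₀.le ha₁).mul_left c, ?_, ?_⟩
  · rw [tsum_mul_left, tsum_geometric_of_lt_one ha₀.le ha₁]
    calc c * (1 - a)⁻¹ = β / 2 := by
          simp only [c]
          field_simp
      _ < β := half_lt_self hβ
  · have h_summable : Summable fun k : ℕ => ((k : ℝ) ^ 1 * a ^ k + a ^ k) / c ^ 2 :=
      ((summable_pow_mul_geometric_of_norm_lt_one 1 (by rwa [Real.norm_of_nonneg ha₀.le])).add
        (summable_geometric_of_lt_one ha₀.le ha₁)).div_const _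
    refine h_summable.congr fun k => ?_
    rw [ha_pow]
    field_simp

variable {V : Type*} [NormedAddCommGroup V] [InnerProductSpace ℝ V] [FiniteDimensional ℝ V]

section Measure

variable [MeasurableSpace V] [BorelSpace V] (μ : Measure V) [μ.IsAddHaarMeasure]

theorem sq_sum_mul_measureReal_graphTrace_le {ι : Type*} (A : Finset (V × ℝ)) (w : V × ℝ → ℝ≥0)
    (I : Finset ι) (z : ι → V × ℝ) {δ : ℝ} (hδ : 0 ≤ δ) :
    (∑ p ∈ A, w p * μ.real (graphTrace (⋃ i ∈ I, closedBall (z i) δ) p)) ^ 2 ≤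
      I.card * (δ ^ finrank ℝ V * μ.real (ball 0 1)) *
        ∑ p ∈ A, w p * ∑ q ∈ A, w q * μ.real (slab (p - q) (2 * δ)) := by
  have h := sq_sum_mul_measure_biUnion_le μ (A := A) (I := I) w
    (H := fun i p => graphTrace (closedBall (z i) δ) p) (J := fun i => closedBall (z i).1 δ)
    (D := fun p q => slab (p - q) (2 * δ))
    (fun i p => (isClosed_graphTrace isClosed_closedBall p).measurableSet)
    (fun i => measurableSet_closedBall) (fun p q => (isClosed_slab _ _).measurableSet)
    (fun i p => graphTrace_closedBall_subset _ _ _)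
    (fun i p q => graphTrace_closedBall_inter_subset _ _ _ _)
  have h_slab : ∀ p q, μ (slab (p - q) (2 * δ)) ≠ ⊤ := fun p q =>
    measure_ne_top_of_subset (sep_subset _ _) measure_closedBall_lt_top.ne
  have h_trace : ∀ p, μ (graphTrace (⋃ i ∈ I, closedBall (z i) δ) p) ≠ ⊤ := fun p =>
    measure_ne_top_of_subset (sep_subset _ _) measure_closedBall_lt_top.ne
  have h_pair : ∀ p q, (w p * w q * μ (slab (p - q) (2 * δ)) : ℝ≥0∞) ≠ ⊤ := fun p q => by
    finiteness [h_slab p q]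
  have h_energy : ∀ p, ∑ q ∈ A, (w p * w q * μ (slab (p - q) (2 * δ)) : ℝ≥0∞) ≠ ⊤ := fun p =>
    ENNReal.sum_ne_top.mpr fun q _ => h_pair p q
  have h_energy_real : ∀ p, (∑ q ∈ A, (w p * w q * μ (slab (p - q) (2 * δ)) : ℝ≥0∞)).toReal =
      w p * ∑ q ∈ A, w q * μ.real (slab (p - q) (2 * δ)) := fun p => by
    rw [ENNReal.toReal_sum fun q _ => h_pair p q, Finset.mul_sum]
    simp only [ENNReal.toReal_mul, ENNReal.coe_toReal, mul_assoc, measureReal_def]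
  simp only [← graphTrace_iUnion, μ.addHaar_closedBall_center, Finset.sum_const,
    nsmul_eq_mul] at h
  have h_real := ENNReal.toReal_mono (ENNReal.mul_ne_top
    (ENNReal.mul_ne_top (ENNReal.natCast_ne_top _) measure_closedBall_lt_top.ne)
    (ENNReal.sum_ne_top.mpr fun p _ => h_energy p)) h
  rw [ENNReal.toReal_pow, ENNReal.toReal_sum fun p _ => by finiteness [h_trace p],
    ENNReal.toReal_mul, ENNReal.toReal_sum fun p _ => h_energy p] at h_real
  simp only [h_energy_real, ENNReal.toReal_mul, ENNReal.coe_toReal, ENNReal.toReal_natCast,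
    ← measureReal_def] at h_real
  rwa [← μ.addHaar_real_closedBall 0 hδ]

theorem sum_mul_measureReal_slab_le {s : ℝ} (hs : s ≤ 1) {k : ℕ} {A : Finset (V × ℝ)}
    {w : V × ℝ → ℝ≥0} {p : V × ℝ}
    (hw : ∀ j ≤ k, ∑ q ∈ A with dist q p ≤ (1 / 2) ^ j, (w q : ℝ) ≤ ((1 / 2 : ℝ) ^ j) ^ s)
    (hA : ∀ q ∈ A, dist q p ≤ 1) :
    ∑ q ∈ A, w q * μ.real (slab (p - q) (2 * (1 / 2) ^ k)) ≤
      (k + 1) * (12 * μ.real (closedBall (0 : V) 2) * ((1 / 2 : ℝ) ^ k) ^ s) := by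
  refine (sum_mul_le_of_frostman hs (M := 6 * μ.real (closedBall (0 : V) 2)) hw hA
    (fun _ _ => measureReal_nonneg) (by positivity) fun q _ => ?_).trans_eq (by ring)
  calc max (dist q p) ((1 / 2) ^ k) * μ.real (slab (p - q) (2 * (1 / 2) ^ k))
      ≤ max ‖p - q‖ (2 * (1 / 2) ^ k) * μ.real (slab (p - q) (2 * (1 / 2) ^ k)) := by
        rw [dist_comm, dist_eq_norm]
        gcongr
        exact le_mul_of_one_le_left (by positivity) one_le_two
    _ ≤ 3 * (2 * (1 / 2) ^ k) * μ.real (closedBall (0 : V) 2) :=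
        max_norm_mul_measureReal_slab_le μ _ (by positivity)
    _ = 6 * μ.real (closedBall (0 : V) 2) * (1 / 2) ^ k := by ring

theorem sum_weights_le_of_frostman {s : ℝ} (hs : s ≤ 1) {k : ℕ} {A : Finset (V × ℝ)}
    {w : V × ℝ → ℝ≥0}
    (hw : ∀ p ∈ A, ∀ j ≤ k,
      ∑ q ∈ A with dist q p ≤ (1 / 2) ^ j, (w q : ℝ) ≤ ((1 / 2 : ℝ) ^ j) ^ s)
    (hA : ∀ p ∈ A, ∀ q ∈ A, dist p q ≤ 1) {ι : Type*} (I : Finset ι) (z : ι → V × ℝ) {θ : ℝ}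
    (hθ : 0 < θ)
    (hA_trace : ∀ p ∈ A, θ ≤ μ.real (graphTrace (⋃ i ∈ I, closedBall (z i) ((1 / 2) ^ k)) p)) :
    ∑ p ∈ A, (w p : ℝ) ≤ 12 * μ.real (ball (0 : V) 1) * μ.real (closedBall (0 : V) 2) *
      (I.card * (k + 1) * ((1 / 2 : ℝ) ^ k) ^ (s + finrank ℝ V) / θ ^ 2) := by
  let W : ℝ := ∑ p ∈ A, (w p : ℝ)
  let c : ℝ := I.card * (((1 / 2) ^ k) ^ finrank ℝ V * μ.real (ball (0 : V) 1))
  let e : ℝ := (k + 1) * (12 * μ.real (closedBall (0 : V) 2) * ((1 / 2 : ℝ) ^ k) ^ s)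
  have h_sq : (W * θ) ^ 2 ≤ c * (W * e) :=
    calc (W * θ) ^ 2
        ≤ (∑ p ∈ A, w p * μ.real (graphTrace (⋃ i ∈ I, closedBall (z i) ((1 / 2) ^ k)) p)) ^ 2 := by
          simp only [W, Finset.sum_mul]
          gcongr with p hp
          exact hA_trace p hp
      _ ≤ c * ∑ p ∈ A, w p * ∑ q ∈ A, w q * μ.real (slab (p - q) (2 * (1 / 2) ^ k)) :=
          sq_sum_mul_measureReal_graphTrace_le μ A w I z (by positivity)
      _ ≤ c * (W * e) := by
          simp only [W, Finset.sum_mul]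
          gcongr with p hp
          exact sum_mul_measureReal_slab_le μ hs (hw p hp) fun q hq => hA q hq p hp
  have hW : W ≤ c * e / θ ^ 2 := by
    rcases (show 0 ≤ W by positivity).eq_or_lt with hW_zero | hW_pos
    · rw [← hW_zero]
      positivity
    · rw [le_div_iff₀ (by positivity)]
      exact le_of_mul_le_mul_right (by linarith) hW_pos
  refine hW.trans_eq ?_
  rw [Real.rpow_add (by positivity), Real.rpow_natCast]
  simp only [c, e]
  ring

theorem hausdorffContent_le_of_le_measure_graphTrace {s : ℝ} (hs₀ : 0 ≤ s) (hs₁ : s ≤ 1)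
    {E : Set (V × ℝ)} (hE : ∀ p ∈ E, ∀ q ∈ E, dist p q ≤ 1) {ι : Type*} (I : Finset ι)
    (z : ι → V × ℝ) (k : ℕ) {θ : ℝ} (hθ : 0 < θ)
    (hE_trace : ∀ p ∈ E,
      ENNReal.ofReal θ ≤ μ (graphTrace (⋃ i ∈ I, closedBall (z i) ((1 / 2) ^ k)) p)) :
    hausdorffContent s E ≤ ENNReal.ofReal
      (12 ^ s * (12 * μ.real (ball (0 : V) 1) * μ.real (closedBall (0 : V) 2) *
        (I.card * (k + 1) * ((1 / 2 : ℝ) ^ k) ^ (s + finrank ℝ V) / θ ^ 2))) := by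
  have hE_bdd : Bornology.IsBounded E := Metric.isBounded_iff.mpr ⟨1, fun p hp q hq => hE p hp q hq⟩
  obtain ⟨A, w, hAE, hw, h_content⟩ := exists_frostman_weights hs₀
    (hE_bdd.isCompact_closure.totallyBounded.subset subset_closure) k
  refine h_content.trans (ENNReal.ofReal_le_ofReal ?_)
  gcongr
  refine sum_weights_le_of_frostman μ hs₁ hw (fun p hp q hq => hE p (hAE hp) q (hAE hq)) I z hθ
    fun p hp => (ENNReal.ofReal_le_iff_le_toReal ?_).mp (hE_trace p (hAE hp))
  exact measure_ne_top_of_subset (sep_subset _ _) measure_closedBall_lt_top.ne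

theorem hausdorffContent_le_tsum_of_iUnion_affineGraph_subset {s : ℝ} (hs₀ : 0 ≤ s) (hs₁ : s ≤ 1)
    {E : Set (V × ℝ)} (hE : ∀ p ∈ E, ∀ q ∈ E, dist p q ≤ 1) {ι : Type*} {I : ℕ → Finset ι}
    {z : ι → V × ℝ}
    (h_cover : ⋃ p ∈ E, affineGraph p ⊆ ⋃ k, ⋃ i ∈ I k, closedBall (z i) ((1 / 2) ^ k))
    {θ : ℕ → ℝ} (hθ : ∀ k, 0 < θ k)
    (hθ_sum : ∑' k, ENNReal.ofReal (θ k) < μ (closedBall 0 1)) :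
    hausdorffContent s E ≤ ∑' k : ℕ, ENNReal.ofReal
      (12 ^ s * (12 * μ.real (ball (0 : V) 1) * μ.real (closedBall (0 : V) 2) *
        ((I k).card * (k + 1) * ((1 / 2 : ℝ) ^ k) ^ (s + finrank ℝ V) / θ k ^ 2))) := by
  let F : ℕ → Set (V × ℝ) := fun k => ⋃ i ∈ I k, closedBall (z i) ((1 / 2) ^ k)
  let E' : ℕ → Set (V × ℝ) := fun k =>
    {p ∈ E | ENNReal.ofReal (θ k) ≤ μ (graphTrace (F k) p)}
  have hE_cover : E ⊆ ⋃ k, E' k := fun p hp => by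
    have h_trace : ⋃ k, graphTrace (F k) p = closedBall 0 1 := by
      rw [← graphTrace_iUnion]
      exact graphTrace_eq_closedBall ((subset_biUnion_of_mem hp).trans h_cover)
    rw [← h_trace] at hθ_sum
    obtain ⟨k, hk⟩ := exists_lt_measure_of_tsum_lt hθ_sum
    exact mem_iUnion.mpr ⟨k, hp, hk.le⟩
  calc hausdorffContent s E ≤ ∑' k, hausdorffContent s (E' k) :=
        (measure_mono hE_cover).trans (measure_iUnion_le _)
    _ ≤ _ := ENNReal.tsum_le_tsum fun k => hausdorffContent_le_of_le_measure_graphTrace μ hs₀ hs₁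
        (fun p hp q hq => hE p hp.1 q hq.1) (I k) z k (hθ k) fun p hp => hp.2

end Measure

theorem hausdorffContent_eq_zero_of_iUnion_affineGraph {s t : ℝ} (hs₀ : 0 ≤ s) (hs₁ : s ≤ 1)
    (ht : 0 < t) (hts : t < s + finrank ℝ V) {E : Set (V × ℝ)}
    (hE : ∀ p ∈ E, ∀ q ∈ E, dist p q ≤ 1)
    (h : hausdorffContent t (⋃ p ∈ E, affineGraph p) = 0) : hausdorffContent s E = 0 := by
  borelize V
  let μ : Measure V := Measure.addHaar
  have hβ : 0 < μ.real (closedBall (0 : V) 1) :=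
    ENNReal.toReal_pos (measure_closedBall_pos μ 0 one_pos).ne' measure_closedBall_lt_top.ne
  obtain ⟨θ, hθ, hθ_summable, hθ_sum, h_summable⟩ :=
    exists_summable_thresholds (sub_pos.mpr hts) hβ
  have hθ_tsum : ∑' k, ENNReal.ofReal (θ k) < μ (closedBall 0 1) := by
    rw [← ENNReal.ofReal_tsum_of_nonneg (fun k => (hθ k).le) hθ_summable,
      ← ofReal_measureReal measure_closedBall_lt_top.ne]
    exact (ENNReal.ofReal_lt_ofReal_iff hβ).mpr hθ_sum
  let C : ℝ := 12 ^ s * (12 * μ.real (ball (0 : V) 1) * μ.real (closedBall (0 : V) 2))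
  let u : ℕ → ℝ := fun k => (k + 1) * ((1 / 2 : ℝ) ^ k) ^ (s + finrank ℝ V - t) / θ k ^ 2
  have h_le : ∀ ε : ℝ, 0 < ε → hausdorffContent s E ≤ ENNReal.ofReal (ε * (C * ∑' k, u k)) := by
    intro ε hε
    obtain ⟨z, I, h_cover, h_card⟩ := exists_finset_cover_by_scale ht h hε
    refine (hausdorffContent_le_tsum_of_iUnion_affineGraph_subset μ hs₀ hs₁ hE h_cover hθ
      hθ_tsum).trans ?_
    rw [← tsum_mul_left, ← tsum_mul_left, ENNReal.ofReal_tsum_of_nonneg (fun k => by positivity)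
      ((h_summable.mul_left C).mul_left ε)]
    refine ENNReal.tsum_le_tsum fun k => ENNReal.ofReal_le_ofReal ?_
    calc 12 ^ s * (12 * μ.real (ball (0 : V) 1) * μ.real (closedBall (0 : V) 2) *
          ((I k).card * (k + 1) * ((1 / 2 : ℝ) ^ k) ^ (s + finrank ℝ V) / θ k ^ 2))
        = (I k).card * ((1 / 2 : ℝ) ^ k) ^ t * (C * u k) := by
          rw [← sub_add_cancel (s + finrank ℝ V) t, Real.rpow_add (by positivity)]
          simp only [C, u]
          ring
      _ ≤ ε * (C * u k) := by
          gcongr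
          exact h_card k
  have h_tendsto : Tendsto (fun ε : ℝ => ENNReal.ofReal (ε * (C * ∑' k, u k))) (𝓝[>] 0) (𝓝 0) := by
    have h_cont : Continuous fun ε : ℝ => ENNReal.ofReal (ε * (C * ∑' k, u k)) :=
      ENNReal.continuous_ofReal.comp (by fun_prop)
    simpa using (h_cont.tendsto 0).mono_left nhdsWithin_le_nhds
  exact le_zero_iff.mp (ge_of_tendsto h_tendsto (eventually_mem_nhdsWithin.mono h_le))

end LowerBound

section DimensionFormula

open Metric Set Module Topology
open scoped ENNReal NNReal

variable {V : Type*} [NormedAddCommGroup V] [InnerProductSpace ℝ V] [FiniteDimensional ℝ V]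

theorem dimH_iUnion_affineGraph_le (E : Set (V × ℝ)) :
    dimH (⋃ p ∈ E, affineGraph p) ≤ dimH E + finrank ℝ V := by
  rw [iUnion_affineGraph_eq_image]
  exact ((contDiff_snd.prodMk contDiff_affineEval).contDiffOn.dimH_image_le convex_univ
    (subset_univ _)).trans (dimH_prod_univ_le E)

theorem dimH_le_finrank_add_one (S : Set (V × ℝ)) : dimH S ≤ finrank ℝ V + 1 := by
  refine (dimH_mono (subset_univ S)).trans_eq ?_
  rw [Real.dimH_univ_eq_finrank, finrank_prod, finrank_self, Nat.cast_add, Nat.cast_one]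

theorem add_finrank_le_dimH_iUnion_affineGraph_of_dist_le_one {s : ℝ≥0} (hs₀ : 0 < s)
    (hs₁ : s ≤ 1) {E : Set (V × ℝ)} (hE : ∀ p ∈ E, ∀ q ∈ E, dist p q ≤ 1) (hsE : s < dimH E) :
    s + finrank ℝ V ≤ dimH (⋃ p ∈ E, affineGraph p) := by
  by_contra! h_lt
  obtain ⟨t, hLt, hts⟩ := ENNReal.lt_iff_exists_nnreal_btwn.mp h_lt
  have ht : 0 < t := ENNReal.coe_pos.mp (pos_of_gt hLt)
  have h_zero : hausdorffContent s E = 0 :=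
    hausdorffContent_eq_zero_of_iUnion_affineGraph s.2 hs₁ ht (by exact_mod_cast hts) hE
      (hausdorffContent_eq_zero_of_dimH_lt hLt)
  exact hsE.not_ge (dimH_le_of_hausdorffContent_eq_zero hs₀ h_zero)

theorem finrank_le_dimH_iUnion_affineGraph {E : Set (V × ℝ)} (hE : E.Nonempty) :
    finrank ℝ V ≤ dimH (⋃ p ∈ E, affineGraph p) := by
  obtain ⟨p, hp⟩ := hE
  have h_fst : Prod.fst '' affineGraph p = univ :=
    eq_univ_of_forall fun x => ⟨(x, affineEval p x), rfl, rfl⟩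
  calc (finrank ℝ V : ℝ≥0∞) = dimH (Prod.fst '' affineGraph p) := by
        rw [h_fst, Real.dimH_univ_eq_finrank]
    _ ≤ dimH (affineGraph p) := LipschitzWith.prod_fst.dimH_image_le _
    _ ≤ dimH (⋃ p ∈ E, affineGraph p) := dimH_mono (subset_biUnion_of_mem hp)

theorem add_finrank_le_dimH_iUnion_affineGraph {s : ℝ≥0} {E : Set (V × ℝ)}
    (hs : s < min (dimH E) 1) : s + finrank ℝ V ≤ dimH (⋃ p ∈ E, affineGraph p) := by
  obtain ⟨hsE, hs₁⟩ := lt_min_iff.mp hs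
  obtain ⟨x, hxE, hx⟩ := exists_mem_nhdsWithin_lt_dimH_of_lt_dimH hsE
  rcases eq_zero_or_pos s with rfl | hs₀
  · rw [ENNReal.coe_zero, zero_add]
    exact finrank_le_dimH_iUnion_affineGraph ⟨x, hxE⟩
  have h_dist : ∀ p ∈ E ∩ closedBall x (1 / 2), ∀ q ∈ E ∩ closedBall x (1 / 2), dist p q ≤ 1 :=
    fun p hp q hq => (dist_triangle_right p q x).trans
      ((add_le_add hp.2 hq.2).trans_eq (add_halves 1))
  calc s + (finrank ℝ V : ℝ≥0∞)
      ≤ dimH (⋃ p ∈ E ∩ closedBall x (1 / 2), affineGraph p) :=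
        add_finrank_le_dimH_iUnion_affineGraph_of_dist_le_one hs₀ (by exact_mod_cast hs₁.le) h_dist
          (hx _ (inter_mem_nhdsWithin E (closedBall_mem_nhds x one_half_pos)))
    _ ≤ dimH (⋃ p ∈ E, affineGraph p) := dimH_mono (biUnion_subset_biUnion_left inter_subset_left)

theorem dimH_hyperplaneUnion_general {E : Set (V × ℝ)} (hE : E.Nonempty) :
    dimH (⋃ p ∈ E, affineGraph p) = min (dimH E + finrank ℝ V) (finrank ℝ V + 1) := by
  refine le_antisymm (le_min (dimH_iUnion_affineGraph_le E) (dimH_le_finrank_add_one _)) ?_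
  rw [add_comm (finrank ℝ V : ℝ≥0∞), min_add_add_right]
  refine add_le_of_le_tsub_right_of_le (finrank_le_dimH_iUnion_affineGraph hE) ?_
  exact ENNReal.le_of_forall_nnreal_lt fun s hs =>
    ENNReal.le_sub_of_add_le_right (ENNReal.natCast_ne_top _)
      (add_finrank_le_dimH_iUnion_affineGraph hs)

end DimensionFormula

/-- **Dimension of a union of hyperplanes.** For a non-empty Borel set `E ⊆ ℝⁿ`,
`dim_H L(E) = min {dim_H E + n − 1, n}`. -/
theorem dimH_hyperplaneUnion (n : ℕ) (hn : 2 ≤ n)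
    (E : Set (EuclideanSpace ℝ (Fin (n - 1)) × ℝ)) (hE : MeasurableSet E)
    (hEne : E.Nonempty) :
    dimH (hyperplaneUnion E) = min (dimH E + ((n - 1 : ℕ) : ENNReal)) (n : ENNReal) := by
  have h : dimH (hyperplaneUnion E) = _ := dimH_hyperplaneUnion_general hEne
  rwa [finrank_euclideanSpace_fin, ← Nat.cast_add_one, Nat.sub_add_cancel (by lia)] at h
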